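/- Let X be a nonempty closed spherically convex subset of S^d. Then (X°, −(X°)) is the largest pair separated by X ∪ (−X): namely X = 𝒞(X°, −(X°)), and for any subsets W₁, W₂ ⊆ S^d with X = 𝒞(W₁,W₂) one has W₁ ⊆ X° and W₂ ⊆ −(X°). -/

import Mathlib

open scoped RealInnerProductSpace Pointwise

noncomputable section

/-- Euclidean space `ℝ^{d+1}`. -/
abbrev E (d : ℕ) : Type := EuclideanSpace ℝ (Fin (d + 1))

/-- The unit sphere `S^d ⊆ ℝ^{d+1}`. -/
def sph (d : ℕ) : Set (E d) := {x | ‖x‖ = 1}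

/-- The closed hemisphere `H(P)` centered at `P`. -/
def hemi {d : ℕ} (P : E d) : Set (E d) := {Q ∈ sph d | 0 ≤ ⟪P, Q⟫}

/-- The spherical polar set `W°`. -/
def polar {d : ℕ} (W : Set (E d)) : Set (E d) := {Q ∈ sph d | ∀ P ∈ W, 0 ≤ ⟪P, Q⟫}

/-- The semi-separation center set `𝒞(W₁, W₂)`. -/
def ssc {d : ℕ} (W₁ W₂ : Set (E d)) : Set (E d) :=
  {P ∈ sph d | (∀ Q ∈ W₁, 0 ≤ ⟪P, Q⟫) ∧ ∀ R ∈ W₂, ⟪P, R⟫ ≤ 0}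

/-- `W ⊆ S^d` is hemispherical if it misses some closed hemisphere. -/
def hemispherical {d : ℕ} (W : Set (E d)) : Prop := ∃ P ∈ sph d, W ∩ hemi P = ∅

/-- A hemispherical set is spherically convex if it contains the normalized segment
between any two of its points. -/
def sphConvex {d : ℕ} (W : Set (E d)) : Prop :=
  hemispherical W ∧ ∀ P ∈ W, ∀ Q ∈ W, ∀ t : ℝ, t ∈ Set.Icc (0 : ℝ) 1 →
    (‖t • P + (1 - t) • Q‖)⁻¹ • (t • P + (1 - t) • Q) ∈ W

/-- The spherical convex hull `s-conv(W)`: normalized convex combinations of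
finitely many points of `W`. -/
def sconv {d : ℕ} (W : Set (E d)) : Set (E d) :=
  {x | ∃ (n : ℕ) (P : Fin n → E d) (l : Fin n → ℝ),
    (∀ i, P i ∈ W) ∧ (∀ i, 0 ≤ l i) ∧ (∑ i, l i) = 1 ∧
    x = (‖∑ i, l i • P i‖)⁻¹ • (∑ i, l i • P i)}

/-!
The vectors whose direction lies in a closed spherically convex set `X` form a closed convex cone,
and on the unit sphere the spherical polar of `X` is the dual of this cone. The bipolar theorem for
closed convex cones therefore gives `X°° = X`. Since `𝒞(W₁, W₂) = (W₁ ∪ -W₂)°`, both claims are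
formal: `𝒞(X°, -X°) = X°° = X`, and `X ⊆ (W₁ ∪ -W₂)°` is equivalent to `W₁ ∪ -W₂ ⊆ X°` because
polarity is an antitone Galois connection.
-/

open Metric NormedSpace

section Cone

variable {V : Type*} [NormedAddCommGroup V] [NormedSpace ℝ V] {X : Set V}

/-- The segment condition of spherical convexity: the normalized segment between any two points
of `X` lies in `X`. Since `normalize 0 = 0`, a subset of the unit sphere with this property
contains no two antipodal points. -/
def IsSphericallyConvex (X : Set V) : Prop :=
  ∀ P ∈ X, ∀ Q ∈ X, ∀ t : ℝ, t ∈ Set.Icc (0 : ℝ) 1 → normalize (t • P + (1 - t) • Q) ∈ X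

theorem IsSphericallyConvex.normalize_smul_add_smul_mem (hX : IsSphericallyConvex X) {x y : V}
    (hx : x ∈ X) (hy : y ∈ X) {a b : ℝ} (ha : 0 < a) (hb : 0 < b) :
    normalize (a • x + b • y) ∈ X := by
  have hab : 0 < a + b := add_pos ha hb
  have hsegment : a • x + b • y = (a + b) • ((a / (a + b)) • x + (1 - a / (a + b)) • y) := by
    rw [one_sub_div hab.ne', add_sub_cancel_left, smul_add, smul_smul, smul_smul,
      mul_div_cancel₀ _ hab.ne', mul_div_cancel₀ _ hab.ne']
  rw [hsegment, normalize_smul_of_pos hab]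
  exact hX x hx y hy _ ⟨by positivity, div_le_one_of_le₀ (by linarith) hab.le⟩

theorem isClosed_setOf_normalize_mem (hX : IsClosed X) :
    IsClosed {v : V | v ≠ 0 → normalize v ∈ X} := by
  have hcont : ContinuousOn (normalize : V → V) {0}ᶜ :=
    (continuousOn_id.norm.inv₀ fun _ hv ↦ norm_ne_zero_iff.2 hv).smul continuousOn_id
  rw [← isOpen_compl_iff]
  convert hcont.isOpen_inter_preimage isOpen_compl_singleton hX.isOpen_compl using 1
  ext v
  simp

/-- The closed convex cone over a closed spherically convex set `X`: the origin together with the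
vectors whose direction lies in `X`. -/
def coneOver (X : Set V) (hcl : IsClosed X) (hcv : IsSphericallyConvex X) : ProperCone ℝ V where
  carrier := {v | v ≠ 0 → normalize v ∈ X}
  zero_mem' h := absurd rfl h
  smul_mem' := by
    rintro ⟨c, hc⟩ v hv hcv
    change c • v ≠ 0 at hcv
    change normalize (c • v) ∈ X
    rw [normalize_smul_of_pos (hc.lt_of_ne' (left_ne_zero_of_smul hcv))]
    exact hv (right_ne_zero_of_smul hcv)
  add_mem' := by
    intro u v hu hv huv
    rcases eq_or_ne u 0 with rfl | hu0
    · simpa only [zero_add] using hv (by simpa only [zero_add] using huv)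
    rcases eq_or_ne v 0 with rfl | hv0
    · simpa only [add_zero] using hu hu0
    simpa only [norm_smul_normalize] using
      hcv.normalize_smul_add_smul_mem (hu hu0) (hv hv0) (norm_pos_iff.2 hu0) (norm_pos_iff.2 hv0)
  isClosed' := isClosed_setOf_normalize_mem hcl

theorem mem_coneOver {hcl : IsClosed X} {hcv : IsSphericallyConvex X} {v : V} :
    v ∈ coneOver X hcl hcv ↔ v ≠ 0 → normalize v ∈ X :=
  Iff.rfl

theorem mem_coneOver_iff_of_norm_eq_one {hcl : IsClosed X} {hcv : IsSphericallyConvex X} {v : V}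
    (hv : ‖v‖ = 1) : v ∈ coneOver X hcl hcv ↔ v ∈ X := by
  have hv0 : v ≠ 0 := norm_ne_zero_iff.1 (hv ▸ one_ne_zero)
  rw [mem_coneOver, normalize_eq_self_of_norm_eq_one hv, imp_iff_right hv0]

end Cone

section Polar

variable {H : Type*} [NormedAddCommGroup H] [InnerProductSpace ℝ H] {X W W₁ W₂ : Set H}

/-- The spherical polar `W°` of a subset `W` of a real inner product space. -/
def sphericalPolar (W : Set H) : Set H :=
  {Q ∈ sphere 0 1 | ∀ P ∈ W, 0 ≤ ⟪P, Q⟫}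

/-- The semi-separation center set `𝒞(W₁, W₂)` in a real inner product space. -/
def semiSeparationCenters (W₁ W₂ : Set H) : Set H :=
  {P ∈ sphere 0 1 | (∀ Q ∈ W₁, 0 ≤ ⟪P, Q⟫) ∧ ∀ R ∈ W₂, ⟪P, R⟫ ≤ 0}

theorem subset_sphericalPolar_comm (hX : X ⊆ sphere 0 1) (hW : W ⊆ sphere 0 1) :
    X ⊆ sphericalPolar W ↔ W ⊆ sphericalPolar X where
  mp h Q hQ := ⟨hW hQ, fun P hP ↦ real_inner_comm P Q ▸ (h hP).2 Q hQ⟩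
  mpr h P hP := ⟨hX hP, fun Q hQ ↦ real_inner_comm Q P ▸ (h hQ).2 P hP⟩

theorem semiSeparationCenters_eq_sphericalPolar (W₁ W₂ : Set H) :
    semiSeparationCenters W₁ W₂ = sphericalPolar (W₁ ∪ -W₂) := by
  ext P
  simp only [semiSeparationCenters, sphericalPolar, Set.mem_ofPred_eq, ← Set.image_neg_eq_neg,
    Set.mem_union, or_imp, forall_and, Set.forall_mem_image, real_inner_comm P, inner_neg_right,
    neg_nonneg]

theorem sphericalPolar_sphericalPolar [CompleteSpace H] (hX : X ⊆ sphere 0 1)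
    (hcl : IsClosed X) (hcv : IsSphericallyConvex X) :
    sphericalPolar (sphericalPolar X) = X := by
  refine Set.Subset.antisymm ?_ ((subset_sphericalPolar_comm hX fun _ hQ ↦ hQ.1).2 subset_rfl)
  rintro P ⟨hP, hP_nonneg⟩
  rw [← mem_coneOver_iff_of_norm_eq_one (hcl := hcl) (hcv := hcv) (mem_sphere_zero_iff_norm.1 hP),
    ← ProperCone.innerDual_innerDual (coneOver X hcl hcv), ProperCone.mem_innerDual]
  intro y hy
  rcases eq_or_ne y 0 with rfl | hy0
  · exact (inner_zero_left P).ge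
  have hy_polar : normalize y ∈ sphericalPolar X := by
    refine ⟨mem_sphere_zero_iff_norm.2 (norm_normalize hy0), fun x hx ↦ ?_⟩
    have hx_cone : x ∈ coneOver X hcl hcv :=
      (mem_coneOver_iff_of_norm_eq_one (mem_sphere_zero_iff_norm.1 (hX hx))).2 hx
    rw [NormedSpace.normalize, real_inner_smul_right]
    exact mul_nonneg (by positivity) (hy hx_cone)
  rw [← norm_smul_normalize y, real_inner_smul_left]
  exact mul_nonneg (norm_nonneg y) (hP_nonneg _ hy_polar)

theorem subset_sphericalPolar_of_subset_semiSeparationCenters (hX : X ⊆ sphere 0 1)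
    (hW₁ : W₁ ⊆ sphere 0 1) (hW₂ : W₂ ⊆ sphere 0 1) (h : X ⊆ semiSeparationCenters W₁ W₂) :
    W₁ ⊆ sphericalPolar X ∧ W₂ ⊆ -sphericalPolar X := by
  have hneg : -W₂ ⊆ sphere 0 1 := fun R hR ↦ by simpa using hW₂ hR
  rw [semiSeparationCenters_eq_sphericalPolar,
    subset_sphericalPolar_comm hX (Set.union_subset hW₁ hneg), Set.union_subset_iff] at h
  exact ⟨h.1, Set.neg_subset.1 h.2⟩

end Polar

theorem stmt_11_general {H : Type*} [NormedAddCommGroup H] [InnerProductSpace ℝ H]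
    [CompleteSpace H] {X : Set H} (hX : X ⊆ sphere 0 1) (hcl : IsClosed X)
    (hcv : IsSphericallyConvex X) :
    X = semiSeparationCenters (sphericalPolar X) (-sphericalPolar X) ∧
      ∀ W₁ W₂ : Set H, W₁ ⊆ sphere 0 1 → W₂ ⊆ sphere 0 1 →
        X = semiSeparationCenters W₁ W₂ → W₁ ⊆ sphericalPolar X ∧ W₂ ⊆ -sphericalPolar X := by
  refine ⟨?_, fun W₁ W₂ hW₁ hW₂ h ↦
    subset_sphericalPolar_of_subset_semiSeparationCenters hX hW₁ hW₂ h.subset⟩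
  rw [semiSeparationCenters_eq_sphericalPolar, neg_neg, Set.union_self,
    sphericalPolar_sphericalPolar hX hcl hcv]

theorem sph_eq_sphere (d : ℕ) : sph d = sphere 0 1 :=
  Set.ext fun _ ↦ mem_sphere_zero_iff_norm.symm

/-- `(X°, −X°)` is the largest pair separated by `X ∪ (−X)`:
`X = 𝒞(X°, −X°)`, and whenever `X = 𝒞(W₁,W₂)`, one has `W₁ ⊆ X°`, `W₂ ⊆ −X°`. -/
theorem stmt_11 (d : ℕ) (X : Set (E d)) (hX : X ⊆ sph d) (hne : X.Nonempty)
    (hcl : IsClosed X) (hcv : sphConvex X) :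
    X = ssc (polar X) (-(polar X)) ∧
      ∀ W₁ W₂ : Set (E d), W₁ ⊆ sph d → W₂ ⊆ sph d →
        X = ssc W₁ W₂ → W₁ ⊆ polar X ∧ W₂ ⊆ -(polar X) := by
  simp only [polar, ssc, sph_eq_sphere] at hX ⊢
  exact stmt_11_general hX hcl hcv.2
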